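/- arXiv:2409.14025 — 3 statements merged into one kernel-verified Lean document; each statement's English description precedes it below -/
import Mathlib

section
/- (Monotonicity along geodesics, inequality (2.5)) Under the hypotheses of the characteristic system: let U ⊆ {(r,φ,z) : r > 0} be open, n : U → ℝ a C¹ function with n > 0 and ∂_r n ≥ 0 on U, τ : U → ℝ a C² solution of (∂_r τ)² + (1/r²)(∂_φ τ)² + (∂_z τ)² = n², and γ(s) = (r(s),φ(s),z(s)) a C¹ curve in U on an interval I satisfying r' = (∂_r τ ∘ γ)/ (n∘γ)², φ' = (∂_φ τ ∘ γ)/(r² (n∘γ)²), z' = (∂_z τ ∘ γ)/(n∘γ)². Then the function q₁(s) = (∂_r τ)(γ(s)) satisfies q₁'(s) ≥ 0 on I; in particular q₁ is nondecreasing, so q₁(s) ≥ q₁(s₀) for all s ≥ s₀ in I. -/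
open Real

/-- Partial derivative in the first (radial) cylindrical coordinate `r`. -/
noncomputable def pdr (f : ℝ × ℝ × ℝ → ℝ) (p : ℝ × ℝ × ℝ) : ℝ :=
  deriv (fun t => f (t, p.2.1, p.2.2)) p.1

/-- Partial derivative in the second (angular) cylindrical coordinate `φ`. -/
noncomputable def pdφ (f : ℝ × ℝ × ℝ → ℝ) (p : ℝ × ℝ × ℝ) : ℝ :=
  deriv (fun t => f (p.1, t, p.2.2)) p.2.1

/-- Partial derivative in the third (vertical) cylindrical coordinate `z`. -/
noncomputable def pdz (f : ℝ × ℝ × ℝ → ℝ) (p : ℝ × ℝ × ℝ) : ℝ :=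
  deriv (fun t => f (p.1, p.2.1, t)) p.2.2

/-!
Write `a, b, c` for the partial derivatives of `τ` in `r, φ, z`. Since second partial derivatives
commute, the derivative of `a = q₁` along a characteristic is
`n⁻² (a ∂_r a + r⁻² b ∂_r b + c ∂_r c)`. The bracket is half the radial derivative of the
left-hand side of the eikonal equation, except for the term coming from the weight `r⁻²`, so it
equals `n ∂_r n + b² / r³`. Hence `q₁' = ∂_r n / n + b² / (r³ n²) ≥ 0`.
-/

section LineDeriv

open Filter Topology

variable {𝕜 E F : Type*} [NontriviallyNormedField 𝕜] [NormedAddCommGroup E] [NormedSpace 𝕜 E]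
  [NormedAddCommGroup F] [NormedSpace 𝕜 F] {f : E → F} {x : E}

theorem lineDeriv_eventuallyEq_fderiv (hf : ContDiffAt 𝕜 1 f x) (v : E) :
    (fun y => lineDeriv 𝕜 f y v) =ᶠ[𝓝 x] fun y => fderiv 𝕜 f y v := by
  filter_upwards [hf.eventually (by simp)] with y hy
  exact (hy.differentiableAt one_ne_zero).lineDeriv_eq_fderiv

theorem hasFDerivAt_lineDeriv (hf : ContDiffAt 𝕜 2 f x) (v : E) :
    HasFDerivAt (fun y => lineDeriv 𝕜 f y v) ((fderiv 𝕜 (fderiv 𝕜 f) x).flip v) x := by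
  have hfderiv : DifferentiableAt 𝕜 (fderiv 𝕜 f) x :=
    (hf.fderiv_right one_add_one_eq_two.le).differentiableAt one_ne_zero
  exact ((ContinuousLinearMap.apply 𝕜 F v).hasFDerivAt.comp x hfderiv.hasFDerivAt)
    |>.congr_of_eventuallyEq (lineDeriv_eventuallyEq_fderiv (hf.of_le one_le_two) v)

theorem lineDeriv_lineDeriv_comm [IsRCLikeNormedField 𝕜] (hf : ContDiffAt 𝕜 2 f x) (v w : E) :
    lineDeriv 𝕜 (fun y => lineDeriv 𝕜 f y v) x w =
      lineDeriv 𝕜 (fun y => lineDeriv 𝕜 f y w) x v := by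
  have hsymm : IsSymmSndFDerivAt 𝕜 f x := hf.isSymmSndFDerivAt (by simp)
  rw [((hasFDerivAt_lineDeriv hf v).hasLineDerivAt w).lineDeriv,
    ((hasFDerivAt_lineDeriv hf w).hasLineDerivAt v).lineDeriv]
  exact hsymm w v

end LineDeriv

section PartialDerivatives

variable {f : ℝ × ℝ × ℝ → ℝ} {p : ℝ × ℝ × ℝ}

theorem pdr_eq_lineDeriv (f : ℝ × ℝ × ℝ → ℝ) : pdr f = fun p => lineDeriv ℝ f p (1, 0, 0) := by
  ext ⟨r, φ, z⟩
  simpa [lineDeriv, pdr] using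
    (deriv_comp_const_add (fun t => f (t, φ, z)) r 0).symm

theorem pdφ_eq_lineDeriv (f : ℝ × ℝ × ℝ → ℝ) : pdφ f = fun p => lineDeriv ℝ f p (0, 1, 0) := by
  ext ⟨r, φ, z⟩
  simpa [lineDeriv, pdφ] using
    (deriv_comp_const_add (fun t => f (r, t, z)) φ 0).symm

theorem pdz_eq_lineDeriv (f : ℝ × ℝ × ℝ → ℝ) : pdz f = fun p => lineDeriv ℝ f p (0, 0, 1) := by
  ext ⟨r, φ, z⟩
  simpa [lineDeriv, pdz] using
    (deriv_comp_const_add (fun t => f (r, φ, t)) z 0).symm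

theorem fderiv_apply_eq_pd (hf : DifferentiableAt ℝ f p) (v : ℝ × ℝ × ℝ) :
    fderiv ℝ f p v = v.1 * pdr f p + v.2.1 * pdφ f p + v.2.2 * pdz f p := by
  have hv : v = v.1 • (1, 0, 0) + v.2.1 • (0, 1, 0) + v.2.2 • (0, 0, 1) := by simp
  simp only [pdr_eq_lineDeriv, pdφ_eq_lineDeriv, pdz_eq_lineDeriv, hf.lineDeriv_eq_fderiv]
  conv_lhs => rw [hv]
  simp only [map_add, map_smul, smul_eq_mul]

theorem hasDerivAt_comp_of_pd {γ : ℝ → ℝ × ℝ × ℝ} {v : ℝ × ℝ × ℝ} {s : ℝ}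
    (hf : DifferentiableAt ℝ f (γ s)) (hγ : HasDerivAt γ v s) :
    HasDerivAt (fun t => f (γ t))
      (v.1 * pdr f (γ s) + v.2.1 * pdφ f (γ s) + v.2.2 * pdz f (γ s)) s := by
  rw [← fderiv_apply_eq_pd hf]
  exact hf.hasFDerivAt.comp_hasDerivAt s hγ

theorem hasDerivAt_radial (hf : DifferentiableAt ℝ f p) :
    HasDerivAt (fun t => f (t, p.2.1, p.2.2)) (pdr f p) p.1 := by
  have hline : DifferentiableAt ℝ (fun t : ℝ => (t, p.2.1, p.2.2)) p.1 := by fun_prop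
  exact (DifferentiableAt.fun_comp' p.1 hf hline).hasDerivAt

theorem differentiableAt_pdr (hf : ContDiffAt ℝ 2 f p) : DifferentiableAt ℝ (pdr f) p := by
  rw [pdr_eq_lineDeriv]
  exact (hasFDerivAt_lineDeriv hf _).differentiableAt

theorem differentiableAt_pdφ (hf : ContDiffAt ℝ 2 f p) : DifferentiableAt ℝ (pdφ f) p := by
  rw [pdφ_eq_lineDeriv]
  exact (hasFDerivAt_lineDeriv hf _).differentiableAt

theorem differentiableAt_pdz (hf : ContDiffAt ℝ 2 f p) : DifferentiableAt ℝ (pdz f) p := by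
  rw [pdz_eq_lineDeriv]
  exact (hasFDerivAt_lineDeriv hf _).differentiableAt

theorem pdφ_pdr_comm (hf : ContDiffAt ℝ 2 f p) : pdφ (pdr f) p = pdr (pdφ f) p := by
  simpa only [pdr_eq_lineDeriv, pdφ_eq_lineDeriv] using lineDeriv_lineDeriv_comm hf _ _

theorem pdz_pdr_comm (hf : ContDiffAt ℝ 2 f p) : pdz (pdr f) p = pdr (pdz f) p := by
  simpa only [pdr_eq_lineDeriv, pdz_eq_lineDeriv] using lineDeriv_lineDeriv_comm hf _ _

end PartialDerivatives

section Eikonal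

open Filter Topology

variable {n τ : ℝ × ℝ × ℝ → ℝ} {p : ℝ × ℝ × ℝ}

/-- The squared Euclidean norm of the gradient of `τ` in cylindrical coordinates, that is, the
left-hand side of the eikonal equation. -/
noncomputable def cylGradSq (τ : ℝ × ℝ × ℝ → ℝ) (p : ℝ × ℝ × ℝ) : ℝ :=
  (pdr τ p) ^ 2 + (1 / p.1 ^ 2) * (pdφ τ p) ^ 2 + (pdz τ p) ^ 2

/-- The characteristic vector field `n⁻² ∇τ` of the eikonal equation, in the components
`(r', φ', z')` of the cylindrical coordinates; its integral curves are the geodesics. -/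
noncomputable def characteristicField (n τ : ℝ × ℝ × ℝ → ℝ) (p : ℝ × ℝ × ℝ) : ℝ × ℝ × ℝ :=
  (pdr τ p / (n p) ^ 2, pdφ τ p / (p.1 ^ 2 * (n p) ^ 2), pdz τ p / (n p) ^ 2)

theorem pdr_cylGradSq (hτ : ContDiffAt ℝ 2 τ p) (hr : p.1 ≠ 0) :
    pdr (cylGradSq τ) p =
      2 * (pdr τ p * pdr (pdr τ) p + (1 / p.1 ^ 2) * (pdφ τ p * pdr (pdφ τ) p)
        + pdz τ p * pdr (pdz τ) p - (pdφ τ p) ^ 2 / p.1 ^ 3) := by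
  have hweight : HasDerivAt (fun t : ℝ => 1 / t ^ 2) (-2 / p.1 ^ 3) p.1 := by
    refine ((hasDerivAt_const p.1 1).fun_div (hasDerivAt_pow 2 p.1)
      (pow_ne_zero 2 hr)).congr_deriv ?_
    field_simp
    ring
  have hsum := (((hasDerivAt_radial (differentiableAt_pdr hτ)).fun_pow 2).fun_add
    (hweight.fun_mul ((hasDerivAt_radial (differentiableAt_pdφ hτ)).fun_pow 2))).fun_add
    ((hasDerivAt_radial (differentiableAt_pdz hτ)).fun_pow 2)
  refine hsum.deriv.trans ?_
  norm_num
  ring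

theorem pdr_sq (hn : DifferentiableAt ℝ n p) :
    pdr (fun x => n x ^ 2) p = 2 * (n p * pdr n p) := by
  refine ((hasDerivAt_radial hn).fun_pow 2).deriv.trans ?_
  norm_num
  ring

theorem eikonal_radial_deriv (hτ : ContDiffAt ℝ 2 τ p) (hn : DifferentiableAt ℝ n p)
    (hr : p.1 ≠ 0) (heik : cylGradSq τ =ᶠ[𝓝 p] fun x => n x ^ 2) :
    pdr τ p * pdr (pdr τ) p + (1 / p.1 ^ 2) * (pdφ τ p * pdr (pdφ τ) p)
      + pdz τ p * pdr (pdz τ) p = n p * pdr n p + (pdφ τ p) ^ 2 / p.1 ^ 3 := by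
  have hpdr : pdr (cylGradSq τ) p = pdr (fun x => n x ^ 2) p := by
    simpa only [pdr_eq_lineDeriv] using heik.lineDeriv_eq
  rw [pdr_cylGradSq hτ hr, pdr_sq hn] at hpdr
  linarith

theorem hasDerivAt_pdr_along_characteristic {γ : ℝ → ℝ × ℝ × ℝ} {s : ℝ}
    (hτ : ContDiffAt ℝ 2 τ (γ s)) (hn : DifferentiableAt ℝ n (γ s))
    (hr : (γ s).1 ≠ 0) (hn₀ : n (γ s) ≠ 0)
    (heik : cylGradSq τ =ᶠ[𝓝 (γ s)] fun x => n x ^ 2)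
    (hγ : HasDerivAt γ (characteristicField n τ (γ s)) s) :
    HasDerivAt (fun t => pdr τ (γ t))
      (pdr n (γ s) / n (γ s) + (pdφ τ (γ s)) ^ 2 / ((γ s).1 ^ 3 * (n (γ s)) ^ 2)) s := by
  refine (hasDerivAt_comp_of_pd (differentiableAt_pdr hτ) hγ).congr_deriv ?_
  rw [pdφ_pdr_comm hτ, pdz_pdr_comm hτ]
  set p := γ s
  calc
    pdr τ p / n p ^ 2 * pdr (pdr τ) p + pdφ τ p / (p.1 ^ 2 * n p ^ 2) * pdr (pdφ τ) p
        + pdz τ p / n p ^ 2 * pdr (pdz τ) p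
      = (pdr τ p * pdr (pdr τ) p + (1 / p.1 ^ 2) * (pdφ τ p * pdr (pdφ τ) p)
        + pdz τ p * pdr (pdz τ) p) / n p ^ 2 := by field_simp
    _ = (n p * pdr n p + pdφ τ p ^ 2 / p.1 ^ 3) / n p ^ 2 := by
      rw [eikonal_radial_deriv hτ hn hr heik]
    _ = pdr n p / n p + pdφ τ p ^ 2 / (p.1 ^ 3 * n p ^ 2) := by field_simp

end Eikonal

/-- **Monotonicity along geodesics (inequality (2.5)).**
Under the hypotheses of the characteristic system, if in addition `∂_r n ≥ 0` on `U`,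
then `q₁(s) = (∂_r τ)(γ(s))` satisfies `q₁'(s) ≥ 0` on `I`; in particular `q₁` is
nondecreasing on `I`. -/
theorem monotonicity_along_geodesics
    (U : Set (ℝ × ℝ × ℝ)) (hU : IsOpen U) (hUr : ∀ p ∈ U, 0 < p.1)
    (n τ : ℝ × ℝ × ℝ → ℝ)
    (hn : ContDiffOn ℝ 1 n U) (hnpos : ∀ p ∈ U, 0 < n p)
    (hnr : ∀ p ∈ U, 0 ≤ pdr n p)
    (hτ : ContDiffOn ℝ 2 τ U)
    (heik : ∀ p ∈ U,
      (pdr τ p) ^ 2 + (1 / p.1 ^ 2) * (pdφ τ p) ^ 2 + (pdz τ p) ^ 2 = (n p) ^ 2)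
    (I : Set ℝ) (hI : I.OrdConnected)
    (rr pp zz : ℝ → ℝ)
    (hγ : ∀ s ∈ I, (rr s, pp s, zz s) ∈ U)
    (hr' : ∀ s ∈ I,
      HasDerivAt rr (pdr τ (rr s, pp s, zz s) / (n (rr s, pp s, zz s)) ^ 2) s)
    (hp' : ∀ s ∈ I,
      HasDerivAt pp (pdφ τ (rr s, pp s, zz s) / ((rr s) ^ 2 * (n (rr s, pp s, zz s)) ^ 2)) s)
    (hz' : ∀ s ∈ I,
      HasDerivAt zz (pdz τ (rr s, pp s, zz s) / (n (rr s, pp s, zz s)) ^ 2) s) :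
    (∀ s ∈ I, 0 ≤ deriv (fun t => pdr τ (rr t, pp t, zz t)) s)
    ∧ ∀ s₀ ∈ I, ∀ s ∈ I, s₀ ≤ s →
        pdr τ (rr s₀, pp s₀, zz s₀) ≤ pdr τ (rr s, pp s, zz s) := by
  let γ : ℝ → ℝ × ℝ × ℝ := fun t => (rr t, pp t, zz t)
  have hderiv : ∀ s ∈ I, HasDerivAt (fun t => pdr τ (γ t))
      (pdr n (γ s) / n (γ s) + (pdφ τ (γ s)) ^ 2 / ((γ s).1 ^ 3 * (n (γ s)) ^ 2)) s := fun s hs =>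
    have hU_nhds : U ∈ nhds (γ s) := hU.mem_nhds (hγ s hs)
    hasDerivAt_pdr_along_characteristic (hτ.contDiffAt hU_nhds)
      ((hn.contDiffAt hU_nhds).differentiableAt one_ne_zero)
      (hUr _ (hγ s hs)).ne' (hnpos _ (hγ s hs)).ne' (Filter.eventually_of_mem hU_nhds heik)
      ((hr' s hs).prodMk ((hp' s hs).prodMk (hz' s hs)))
  have hnonneg : ∀ s ∈ I, 0 ≤ deriv (fun t => pdr τ (γ t)) s := by
    intro s hs
    have hr₀ : 0 < (γ s).1 := hUr _ (hγ s hs)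
    have hn₀ : 0 < n (γ s) := hnpos _ (hγ s hs)
    have hnr₀ : 0 ≤ pdr n (γ s) := hnr _ (hγ s hs)
    rw [(hderiv s hs).deriv]
    positivity
  have hmono : MonotoneOn (fun t => pdr τ (γ t)) I :=
    monotoneOn_of_deriv_nonneg hI.convex
      (fun s hs => (hderiv s hs).continuousAt.continuousWithinAt)
      (fun s hs => (hderiv s (interior_subset hs)).differentiableAt.differentiableWithinAt)
      (fun s hs => hnonneg s (interior_subset hs))
  exact ⟨hnonneg, fun s₀ hs₀ s hs hle => hmono hs₀ hs hle⟩
end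

section
/- (Theorem 3.1, ODE form) Let ε > 0, B > 0, z₀ ∈ (0,B), and c = ε/√(ε² + B²). Let U ⊆ {(r,φ,z) : r > 0} be open, n : U → ℝ a C¹ function with n > 0 and ∂_r n ≥ 0 on U, and τ : U → ℝ a C² solution of (∂_r τ)² + (1/r²)(∂_φ τ)² + (∂_z τ)² = n². Let γ(s) = (r(s),φ(s),z(s)), s ∈ [s*, S], be a C¹ curve in U satisfying r' = (∂_r τ ∘ γ)/(n∘γ)², φ' = (∂_φ τ ∘ γ)/(r² (n∘γ)²), z' = (∂_z τ ∘ γ)/(n∘γ)², and suppose the initial value satisfies (∂_r τ)(γ(s*)) = ε/√(ε² + (z(s*) − z₀)²) with z(s*) ∈ [0,B]. Then (∂_r τ)(γ(S)) ≥ c = ε/√(ε² + B²). -/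
open Real

open scoped Topology

/-!
The covector `dτ` satisfies Hamilton's equations along a characteristic. Suppose `H (x, dτ x)` is
locally constant and `γ' = c ∂H/∂ξ` at `(γ, dτ γ)`. Differentiating the first relation in a fixed
direction `v` gives `∂H/∂x · v + ∂H/∂ξ · D²τ(v, ·) = 0`, and the symmetry of `D²τ` turns this into
`(dτ ∘ γ)' = -c ∂H/∂x`. For the eikonal Hamiltonian
`H (x, ξ) = ξ_r² + ξ_φ² / r² + ξ_z² - n²` and `c = 1 / (2 n²)`, the `r`-component reads
`(∂_r τ ∘ γ)' = (n ∂_r n + (∂_φ τ)² / r³) / n² ≥ 0`, so `∂_r τ` increases along `γ`. Its initial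
value is at least `ε / √(ε² + B²)` because `|z(s*) - z₀| ≤ B`.
-/

section Characteristics

variable {𝕜 E : Type*} [RCLike 𝕜] [NormedAddCommGroup E] [NormedSpace 𝕜 E]

theorem hasDerivAt_fderiv_comp_of_characteristic {τ : E → 𝕜} {γ : 𝕜 → E} {w : E} {s c h : 𝕜}
    {H : E × (E →L[𝕜] 𝕜) → 𝕜} {H' : E × (E →L[𝕜] 𝕜) →L[𝕜] 𝕜}
    (hτ : ContDiffAt 𝕜 2 τ (γ s)) (hH : HasFDerivAt H H' (γ s, fderiv 𝕜 τ (γ s)))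
    (hconst : ∀ᶠ x in 𝓝 (γ s), H (x, fderiv 𝕜 τ x) = h)
    (hγ : HasDerivAt γ w s) (hw : ∀ η : E →L[𝕜] 𝕜, η w = c * H' (0, η)) :
    HasDerivAt (fun t ↦ fderiv 𝕜 τ (γ t)) (-(c • H'.comp (.inl 𝕜 E (E →L[𝕜] 𝕜)))) s := by
  have hdτ : HasFDerivAt (fderiv 𝕜 τ) (fderiv 𝕜 (fderiv 𝕜 τ) (γ s)) (γ s) :=
    ((hτ.fderiv_right (m := 1) (by norm_num)).differentiableAt one_ne_zero).hasFDerivAt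
  have hsymm : IsSymmSndFDerivAt 𝕜 τ (γ s) := hτ.isSymmSndFDerivAt (by simp)
  have hdiff (v : E) : H' (v, fderiv 𝕜 (fderiv 𝕜 τ) (γ s) v) = 0 := by
    have hzero := (hH.comp (γ s) ((hasFDerivAt_id (γ s)).prodMk hdτ)).unique
      ((hasFDerivAt_const h (γ s)).congr_of_eventuallyEq hconst)
    simpa using DFunLike.congr_fun hzero v
  refine (hdτ.comp_hasDerivAt s hγ).congr_deriv (ContinuousLinearMap.ext fun v ↦ ?_)
  calc fderiv 𝕜 (fderiv 𝕜 τ) (γ s) w v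
    _ = fderiv 𝕜 (fderiv 𝕜 τ) (γ s) v w := hsymm w v
    _ = c * H' (0, fderiv 𝕜 (fderiv 𝕜 τ) (γ s) v) := hw _
    _ = -(c * H' (v, 0)) := by
      have hsplit := H'.map_add (v, 0) (0, fderiv 𝕜 (fderiv 𝕜 τ) (γ s) v)
      rw [Prod.mk_add_mk, add_zero, zero_add, hdiff] at hsplit
      linear_combination -c * hsplit
    _ = (-(c • H'.comp (.inl 𝕜 E (E →L[𝕜] 𝕜)))) v := by simp

end Characteristics

section PartialDerivatives

variable {f : ℝ × ℝ × ℝ → ℝ} {p : ℝ × ℝ × ℝ}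

theorem pdr_eq_fderiv (hf : DifferentiableAt ℝ f p) : pdr f p = fderiv ℝ f p (1, 0, 0) :=
  (hf.hasFDerivAt.comp_hasDerivAt_of_eq p.1 ((hasDerivAt_id p.1).prodMk
    ((hasDerivAt_const p.1 p.2.1).prodMk (hasDerivAt_const p.1 p.2.2))) rfl).deriv

theorem pdφ_eq_fderiv (hf : DifferentiableAt ℝ f p) : pdφ f p = fderiv ℝ f p (0, 1, 0) :=
  (hf.hasFDerivAt.comp_hasDerivAt_of_eq p.2.1 ((hasDerivAt_const p.2.1 p.1).prodMk
    ((hasDerivAt_id p.2.1).prodMk (hasDerivAt_const p.2.1 p.2.2))) rfl).deriv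

theorem pdz_eq_fderiv (hf : DifferentiableAt ℝ f p) : pdz f p = fderiv ℝ f p (0, 0, 1) :=
  (hf.hasFDerivAt.comp_hasDerivAt_of_eq p.2.2 ((hasDerivAt_const p.2.2 p.1).prodMk
    ((hasDerivAt_const p.2.2 p.2.1).prodMk (hasDerivAt_id p.2.2))) rfl).deriv

end PartialDerivatives

theorem map_eq_add_smul_coordinates {R M F : Type*} [Semiring R] [AddCommMonoid M] [Module R M]
    [FunLike F (R × R × R) M] [LinearMapClass F R (R × R × R) M] (f : F) (w : R × R × R) :
    f w = w.1 • f (1, 0, 0) + w.2.1 • f (0, 1, 0) + w.2.2 • f (0, 0, 1) := by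
  simp [← map_smul, ← map_add]

/-- The Hamiltonian `H (x, ξ) = ξ_r² + ξ_φ² / r² + ξ_z² - n(x)²` of the eikonal equation in
cylindrical coordinates, where the covector `ξ` is a continuous linear form whose components are
its values on the coordinate vectors. The eikonal equation for `τ` is `H (x, dτ x) = 0`. -/
noncomputable def eikonalHamiltonian (n : ℝ × ℝ × ℝ → ℝ)
    (q : (ℝ × ℝ × ℝ) × (ℝ × ℝ × ℝ →L[ℝ] ℝ)) : ℝ :=
  q.2 (1, 0, 0) ^ 2 + 1 / q.1.1 ^ 2 * q.2 (0, 1, 0) ^ 2 + q.2 (0, 0, 1) ^ 2 - n q.1 ^ 2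

/-- The velocity field of the characteristics of the eikonal equation, in cylindrical
coordinates. It is parametrized by travel time: `τ` grows at unit rate along its integral curves. -/
noncomputable def rayVelocity (n τ : ℝ × ℝ × ℝ → ℝ) (p : ℝ × ℝ × ℝ) : ℝ × ℝ × ℝ :=
  (pdr τ p / n p ^ 2, pdφ τ p / (p.1 ^ 2 * n p ^ 2), pdz τ p / n p ^ 2)

section Eikonal

variable {n τ : ℝ × ℝ × ℝ → ℝ}

theorem differentiableAt_eikonalHamiltonian {q : (ℝ × ℝ × ℝ) × (ℝ × ℝ × ℝ →L[ℝ] ℝ)}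
    (hr : q.1.1 ≠ 0) (hn : DifferentiableAt ℝ n q.1) :
    DifferentiableAt ℝ (eikonalHamiltonian n) q := by
  have hr_sq : q.1.1 ^ 2 ≠ 0 := pow_ne_zero 2 hr
  unfold eikonalHamiltonian
  fun_prop (disch := assumption)

theorem fderiv_eikonalHamiltonian_apply {x : ℝ × ℝ × ℝ} {ξ : ℝ × ℝ × ℝ →L[ℝ] ℝ}
    (hr : x.1 ≠ 0) (hn : DifferentiableAt ℝ n x) (v : ℝ × ℝ × ℝ) (η : ℝ × ℝ × ℝ →L[ℝ] ℝ) :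
    fderiv ℝ (eikonalHamiltonian n) (x, ξ) (v, η) =
      2 * (ξ (1, 0, 0) * η (1, 0, 0) + ξ (0, 1, 0) * η (0, 1, 0) / x.1 ^ 2 +
        ξ (0, 0, 1) * η (0, 0, 1)) -
      2 * (n x * fderiv ℝ n x v + ξ (0, 1, 0) ^ 2 / x.1 ^ 3 * v.1) := by
  have hH := (differentiableAt_eikonalHamiltonian (q := (x, ξ)) hr hn).hasFDerivAt.hasLineDerivAt
    (v, η)
  have hlinear (a b : ℝ) : HasDerivAt (fun t : ℝ ↦ a + t * b) b 0 := by
    simpa using ((hasDerivAt_id (0 : ℝ)).mul_const b).const_add a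
  have hcomponent (e : ℝ × ℝ × ℝ) :
      HasDerivAt (fun t : ℝ ↦ (ξ e + t * η e) ^ 2) (2 * ξ e * η e) 0 := by
    simpa using (hlinear (ξ e) (η e)).fun_pow 2
  have hweight : HasDerivAt (fun t : ℝ ↦ 1 / (x.1 + t * v.1) ^ 2) (-(2 * v.1 / x.1 ^ 3)) 0 := by
    simp only [one_div]
    refine (((hlinear x.1 v.1).fun_pow 2).fun_inv (by simpa using hr)).congr_deriv ?_
    simp only [zero_mul, add_zero, Nat.cast_ofNat, Nat.add_one_sub_one, pow_one]
    field_simp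
  have hindex : HasDerivAt (fun t : ℝ ↦ n (x + t • v) ^ 2) (2 * n x * fderiv ℝ n x v) 0 := by
    simpa using HasDerivAt.fun_pow (hn.hasFDerivAt.hasLineDerivAt v) 2
  have hsum := (((hcomponent (1, 0, 0)).fun_add (hweight.fun_mul (hcomponent (0, 1, 0)))).fun_add
    (hcomponent (0, 0, 1))).fun_sub hindex
  refine hH.unique (hsum.congr_deriv ?_)
  simp only [zero_mul, add_zero]
  ring

theorem apply_rayVelocity {p : ℝ × ℝ × ℝ} (hτ : DifferentiableAt ℝ τ p)
    (hn : DifferentiableAt ℝ n p) (hr : p.1 ≠ 0) (hn0 : n p ≠ 0) (η : ℝ × ℝ × ℝ →L[ℝ] ℝ) :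
    η (rayVelocity n τ p) =
      1 / (2 * n p ^ 2) * fderiv ℝ (eikonalHamiltonian n) (p, fderiv ℝ τ p) (0, η) := by
  rw [map_eq_add_smul_coordinates, fderiv_eikonalHamiltonian_apply hr hn, rayVelocity,
    pdr_eq_fderiv hτ, pdφ_eq_fderiv hτ, pdz_eq_fderiv hτ]
  simp only [smul_eq_mul, map_zero, Prod.fst_zero, mul_zero, add_zero, sub_zero]
  field_simp

theorem hasDerivAt_pdr_comp_ray {γ : ℝ → ℝ × ℝ × ℝ} {s : ℝ}
    (hτ : ContDiffAt ℝ 2 τ (γ s)) (hn : DifferentiableAt ℝ n (γ s))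
    (hr : (γ s).1 ≠ 0) (hn0 : n (γ s) ≠ 0)
    (heik : ∀ᶠ p in 𝓝 (γ s),
      pdr τ p ^ 2 + 1 / p.1 ^ 2 * pdφ τ p ^ 2 + pdz τ p ^ 2 = n p ^ 2)
    (hγ : HasDerivAt γ (rayVelocity n τ (γ s)) s) :
    HasDerivAt (fun t ↦ pdr τ (γ t))
      ((n (γ s) * pdr n (γ s) + pdφ τ (γ s) ^ 2 / (γ s).1 ^ 3) / n (γ s) ^ 2) s := by
  have hdiff : ∀ᶠ p in 𝓝 (γ s), DifferentiableAt ℝ τ p :=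
    (hτ.eventually (by simp)).mono fun p hp ↦ hp.differentiableAt two_ne_zero
  have hτs : DifferentiableAt ℝ τ (γ s) := hdiff.self_of_nhds
  have hH := (differentiableAt_eikonalHamiltonian (q := (γ s, fderiv ℝ τ (γ s))) hr hn).hasFDerivAt
  have hzero : ∀ᶠ p in 𝓝 (γ s), eikonalHamiltonian n (p, fderiv ℝ τ p) = 0 := by
    filter_upwards [hdiff, heik] with p hp hpe
    rw [eikonalHamiltonian, ← pdr_eq_fderiv hp, ← pdφ_eq_fderiv hp, ← pdz_eq_fderiv hp, hpe,
      sub_self]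
  have hmomentum : HasDerivAt (fun t ↦ fderiv ℝ τ (γ t) (1, 0, 0))
      (-(1 / (2 * n (γ s) ^ 2) *
        fderiv ℝ (eikonalHamiltonian n) (γ s, fderiv ℝ τ (γ s)) ((1, 0, 0), 0))) s := by
    simpa using (hasDerivAt_fderiv_comp_of_characteristic hτ hH hzero hγ
      (apply_rayVelocity hτs hn hr hn0)).clm_apply (hasDerivAt_const s (1, 0, 0))
  refine (hmomentum.congr_of_eventuallyEq
    ((hγ.continuousAt.eventually hdiff).mono fun t ht ↦ pdr_eq_fderiv ht)).congr_deriv ?_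
  rw [fderiv_eikonalHamiltonian_apply hr hn, pdr_eq_fderiv hn, pdφ_eq_fderiv hτs]
  simp only [zero_apply]
  field_simp
  ring

theorem monotoneOn_pdr_comp_ray {U : Set (ℝ × ℝ × ℝ)} {D : Set ℝ} {γ : ℝ → ℝ × ℝ × ℝ}
    (hU : IsOpen U) (hτ : ContDiffOn ℝ 2 τ U) (hn : DifferentiableOn ℝ n U)
    (heik : ∀ p ∈ U, pdr τ p ^ 2 + 1 / p.1 ^ 2 * pdφ τ p ^ 2 + pdz τ p ^ 2 = n p ^ 2)
    (hD : Convex ℝ D) (hγU : Set.MapsTo γ D U)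
    (hγ : ∀ s ∈ D, HasDerivAt γ (rayVelocity n τ (γ s)) s)
    (hr : ∀ s ∈ D, 0 < (γ s).1) (hnpos : ∀ s ∈ D, 0 < n (γ s))
    (hnr : ∀ s ∈ D, 0 ≤ pdr n (γ s)) :
    MonotoneOn (fun s ↦ pdr τ (γ s)) D := by
  have hderiv (s : ℝ) (hs : s ∈ D) :=
    have hUs : U ∈ 𝓝 (γ s) := hU.mem_nhds (hγU hs)
    hasDerivAt_pdr_comp_ray (hτ.contDiffAt hUs) (hn.differentiableAt hUs) (hr s hs).ne'
      (hnpos s hs).ne' (Filter.eventually_of_mem hUs heik) (hγ s hs)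
  refine monotoneOn_of_hasDerivWithinAt_nonneg hD
    (fun s hs ↦ (hderiv s hs).continuousAt.continuousWithinAt)
    (fun s hs ↦ (hderiv s (interior_subset hs)).hasDerivWithinAt) fun s hs ↦ ?_
  have := hr s (interior_subset hs)
  have := hnpos s (interior_subset hs)
  have := hnr s (interior_subset hs)
  positivity

end Eikonal

/-- **Theorem 3.1, ODE form.**
If along the characteristic curve `γ` on `[s*,S]` (for a refractive index `n` with
`n > 0` and `∂_r n ≥ 0`) the initial value satisfies
`(∂_r τ)(γ(s*)) = ε/√(ε² + (z(s*) − z₀)²)` with `z(s*) ∈ [0,B]`, then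
`(∂_r τ)(γ(S)) ≥ ε/√(ε² + B²)`. -/
theorem theorem_3_1_ODE_form
    (ε B z₀ : ℝ) (hε : 0 < ε) (hB : 0 < B) (hz₀ : z₀ ∈ Set.Ioo 0 B)
    (U : Set (ℝ × ℝ × ℝ)) (hU : IsOpen U) (hUr : ∀ p ∈ U, 0 < p.1)
    (n τ : ℝ × ℝ × ℝ → ℝ)
    (hn : ContDiffOn ℝ 1 n U) (hnpos : ∀ p ∈ U, 0 < n p)
    (hnr : ∀ p ∈ U, 0 ≤ pdr n p)
    (hτ : ContDiffOn ℝ 2 τ U)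
    (heik : ∀ p ∈ U,
      (pdr τ p) ^ 2 + (1 / p.1 ^ 2) * (pdφ τ p) ^ 2 + (pdz τ p) ^ 2 = (n p) ^ 2)
    (sstar S : ℝ) (hsS : sstar ≤ S)
    (rr pp zz : ℝ → ℝ)
    (hγ : ∀ s ∈ Set.Icc sstar S, (rr s, pp s, zz s) ∈ U)
    (hr' : ∀ s ∈ Set.Icc sstar S,
      HasDerivAt rr (pdr τ (rr s, pp s, zz s) / (n (rr s, pp s, zz s)) ^ 2) s)
    (hp' : ∀ s ∈ Set.Icc sstar S,
      HasDerivAt pp (pdφ τ (rr s, pp s, zz s) / ((rr s) ^ 2 * (n (rr s, pp s, zz s)) ^ 2)) s)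
    (hz' : ∀ s ∈ Set.Icc sstar S,
      HasDerivAt zz (pdz τ (rr s, pp s, zz s) / (n (rr s, pp s, zz s)) ^ 2) s)
    (hzs : zz sstar ∈ Set.Icc 0 B)
    (hinit : pdr τ (rr sstar, pp sstar, zz sstar)
      = ε / Real.sqrt (ε ^ 2 + (zz sstar - z₀) ^ 2)) :
    ε / Real.sqrt (ε ^ 2 + B ^ 2) ≤ pdr τ (rr S, pp S, zz S) := by
  have hmono : MonotoneOn (fun s ↦ pdr τ (rr s, pp s, zz s)) (Set.Icc sstar S) :=
    monotoneOn_pdr_comp_ray hU hτ (hn.differentiableOn one_ne_zero) heik (convex_Icc sstar S) hγ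
      (fun s hs ↦ (hr' s hs).prodMk ((hp' s hs).prodMk (hz' s hs)))
      (fun s hs ↦ hUr _ (hγ s hs)) (fun s hs ↦ hnpos _ (hγ s hs)) (fun s hs ↦ hnr _ (hγ s hs))
  have hdist : (zz sstar - z₀) ^ 2 ≤ B ^ 2 := by
    apply sq_le_sq' <;> linarith [hzs.1, hzs.2, hz₀.1, hz₀.2]
  calc ε / √(ε ^ 2 + B ^ 2)
    _ ≤ ε / √(ε ^ 2 + (zz sstar - z₀) ^ 2) := by gcongr
    _ = pdr τ (rr sstar, pp sstar, zz sstar) := hinit.symm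
    _ ≤ pdr τ (rr S, pp S, zz S) := hmono (Set.left_mem_Icc.2 hsS) (Set.right_mem_Icc.2 hsS) hsS
end

section
/- (Equation (4.1) and invertibility of A_N) Let B > 0 and let {Ψ_n}_{n=0}^∞ be the orthonormal system in L²(0,B) obtained by Gram–Schmidt orthonormalization of the sequence f_n(z) = z^n e^z, so that Ψ_n(z) = P_n(z) e^z with P_n a polynomial of degree n with positive leading coefficient. Define a_{mn} = ∫₀^B Ψ_m(z) Ψ_n'(z) dz, where Ψ_n'(z) = (P_n(z) + P_n'(z)) e^z. Then a_{mn} = 1 if m = n and a_{mn} = 0 if m > n. Consequently, for every integer N ≥ 1 the matrix A_N = (a_{mn})_{m,n=0}^{N−1} satisfies det A_N = 1, and in particular A_N is invertible. -/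
open MeasureTheory Real

/-- The generating functions `z ↦ z^n e^z`. -/
noncomputable def fgen (n : ℕ) : ℝ → ℝ := fun z => z ^ n * Real.exp z

/-!
Differentiating `Ψₙ = Pₙ e^z` adds to `Ψₙ` the term `Pₙ' e^z`, and `Pₙ'` has degree `< n`. For
`n ≤ m` it is therefore a combination of `P₀, …, P_{m-1}`, so `Ψₘ` is orthogonal to `Pₙ' e^z` and
`a m n = ⟨Ψₘ, Ψₙ⟩`: the matrices `A_N` are upper triangular with unit diagonal. Of the pairing
`(p, q) ↦ ∫ p q e^{2z}` only its bilinearity enters.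
-/

section PolynomialSequence

open Polynomial

variable {R : Type*} [CommRing R] (S : Polynomial.Sequence R)

theorem linearMap_eq_zero_of_degree_lt {M : Type*} [AddCommGroup M] [Module R M]
    (φ : R[X] →ₗ[R] M) {m : ℕ} (hS : ∀ i < m, IsUnit (S i).leadingCoeff)
    (hφ : ∀ i < m, φ (S i) = 0) {q : R[X]} (hq : q.degree < m) : φ q = 0 := by
  have hq_span : q ∈ Submodule.span R (S '' Set.Iio m) := by
    rwa [S.span_degreeLT hS, mem_degreeLT]
  have hspan_le : Submodule.span R (S '' Set.Iio m) ≤ LinearMap.ker φ :=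
    Submodule.span_le.2 (Set.image_subset_iff.2 hφ)
  exact hspan_le hq_span

variable {β : LinearMap.BilinForm R R[X]} (hS : ∀ i, IsUnit (S i).leadingCoeff)
  (horth : ∀ m n, β (S m) (S n) = if m = n then 1 else 0)

include hS horth

theorem orthonormal_apply_add_derivative {m n : ℕ} (hnm : n ≤ m) :
    β (S m) (S n + derivative (S n)) = if m = n then 1 else 0 := by
  have hdeg : (derivative (S n)).degree < m :=
    calc (derivative (S n)).degree < (S n).degree := degree_derivative_lt (S.ne_zero n)
      _ = n := S.degree_eq n
      _ ≤ m := Nat.cast_le.2 hnm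
  have hderiv : β (S m) (derivative (S n)) = 0 :=
    linearMap_eq_zero_of_degree_lt S (β (S m)) (fun i _ => hS i)
      (fun i hi => by rw [horth, if_neg hi.ne']) hdeg
  rw [map_add, hderiv, add_zero, horth]

theorem matrix_AN_det_one_and_invertible_general (a : ℕ → ℕ → R)
    (ha : ∀ m n, a m n = β (S m) (S n + derivative (S n))) :
    (∀ n, a n n = 1)
    ∧ (∀ m n, n < m → a m n = 0)
    ∧ ∀ N : ℕ,
        Matrix.det (Matrix.of fun i j : Fin N => a i j) = 1
        ∧ IsUnit (Matrix.of fun i j : Fin N => a i j) := by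
  have hdiag (n : ℕ) : a n n = 1 := by
    rw [ha, orthonormal_apply_add_derivative S hS horth le_rfl, if_pos rfl]
  have hlower (m n : ℕ) (hnm : n < m) : a m n = 0 := by
    rw [ha, orthonormal_apply_add_derivative S hS horth hnm.le, if_neg hnm.ne']
  have hdet (N : ℕ) : Matrix.det (Matrix.of fun i j : Fin N => a i j) = 1 := by
    have hupper : (Matrix.of fun i j : Fin N => a i j).IsUpperTriangular :=
      fun i j hji => hlower i j hji
    rw [Matrix.det_of_isUpperTriangular hupper]
    exact Finset.prod_eq_one fun i _ => hdiag i
  exact ⟨hdiag, hlower, fun N => ⟨hdet N,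
    (Matrix.isUnit_iff_isUnit_det _).2 (hdet N ▸ isUnit_one)⟩⟩

end PolynomialSequence

section WeightedBilinForm

open Polynomial

variable {w : ℝ → ℝ} {b c : ℝ}

theorem intervalIntegrable_eval_mul (hw : IntervalIntegrable w volume b c) (p : ℝ[X]) :
    IntervalIntegrable (fun z => p.eval z * w z) volume b c :=
  hw.continuousOn_mul p.continuousOn

/-- The moment functional `p ↦ ∫ z in b..c, p(z) w(z)` of an integrable weight `w`. -/
noncomputable def momentFunctional (hw : IntervalIntegrable w volume b c) : ℝ[X] →ₗ[ℝ] ℝ where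
  toFun p := ∫ z in b..c, p.eval z * w z
  map_add' p q := by
    simp only [eval_add, add_mul]
    exact intervalIntegral.integral_add (intervalIntegrable_eval_mul hw p)
      (intervalIntegrable_eval_mul hw q)
  map_smul' r p := by
    simp only [eval_smul, smul_eq_mul, mul_assoc, intervalIntegral.integral_const_mul,
      RingHom.id_apply]

/-- The pairing `(p, q) ↦ ∫ z in b..c, (p(z) e^z) (q(z) e^z)`, which transports the inner product of
`L²(b, c)` to polynomials along `p ↦ p e^z`. -/
noncomputable def expBilinForm (b c : ℝ) : LinearMap.BilinForm ℝ ℝ[X] :=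
  (LinearMap.mul ℝ ℝ[X]).compr₂
    (momentFunctional (w := fun z => exp z * exp z) (b := b) (c := c)
      ((continuous_exp.mul continuous_exp).intervalIntegrable b c))

theorem expBilinForm_apply (b c : ℝ) (p q : ℝ[X]) :
    expBilinForm b c p q = ∫ z in b..c, (p.eval z * exp z) * (q.eval z * exp z) := by
  change ∫ z in b..c, (p * q).eval z * (exp z * exp z) = _
  simp only [eval_mul, mul_mul_mul_comm]

end WeightedBilinForm

/-- **Equation (4.1) and invertibility of `A_N`.**
Let `{Ψₙ}` be the Gram–Schmidt orthonormalization of `fₙ(z) = zⁿ e^z` in `L²(0,B)`,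
with `Ψₙ(z) = Pₙ(z) e^z`, `deg Pₙ = n`, leading coefficient of `Pₙ` positive.
Define `a_{mn} = ∫₀^B Ψₘ(z) Ψₙ'(z) dz`, where `Ψₙ'(z) = (Pₙ(z) + Pₙ'(z)) e^z`.
Then `a_{nn} = 1`, `a_{mn} = 0` for `m > n`, and for every `N ≥ 1` the matrix
`A_N = (a_{mn})_{m,n=0}^{N−1}` has `det A_N = 1`; in particular `A_N` is invertible. -/
theorem matrix_AN_det_one_and_invertible
    (B : ℝ) (hB : 0 < B) (Ψ : ℕ → ℝ → ℝ) (P : ℕ → Polynomial ℝ)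
    (hform : ∀ n : ℕ, Ψ n = fun z => (P n).eval z * Real.exp z)
    (hdeg : ∀ n : ℕ, (P n).degree = n)
    (hlead : ∀ n : ℕ, 0 < (P n).leadingCoeff)
    (horth : ∀ m n : ℕ,
      ∫ z in (0 : ℝ)..B, Ψ m z * Ψ n z = if m = n then 1 else 0)
    (hspan : ∀ n : ℕ,
      Submodule.span ℝ (Ψ '' Set.Iic n) = Submodule.span ℝ (fgen '' Set.Iic n))
    (a : ℕ → ℕ → ℝ)
    (ha : ∀ m n : ℕ, a m n =
      ∫ z in (0 : ℝ)..B,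
        Ψ m z * (((P n).eval z + ((Polynomial.derivative (P n)).eval z)) * Real.exp z)) :
    (∀ n : ℕ, a n n = 1)
    ∧ (∀ m n : ℕ, n < m → a m n = 0)
    ∧ ∀ N : ℕ, 1 ≤ N →
        Matrix.det (Matrix.of fun i j : Fin N => a i j) = 1
        ∧ IsUnit (Matrix.of fun i j : Fin N => a i j) := by
  let S : Polynomial.Sequence ℝ := ⟨P, hdeg⟩
  have hS (i : ℕ) : IsUnit (S i).leadingCoeff :=
    (Polynomial.leadingCoeff_ne_zero.2 (S.ne_zero i)).isUnit
  have hβ (m n : ℕ) : expBilinForm 0 B (S m) (S n) = if m = n then 1 else 0 := by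
    simp only [expBilinForm_apply, ← horth, hform, S]
  have haβ (m n : ℕ) :
      a m n = expBilinForm 0 B (S m) (S n + Polynomial.derivative (S n)) := by
    simp only [expBilinForm_apply, ha, hform, Polynomial.eval_add, S]
  obtain ⟨hdiag, hlower, hmatrix⟩ := matrix_AN_det_one_and_invertible_general S hS hβ a haβ
  exact ⟨hdiag, hlower, fun N _ => hmatrix N⟩
end
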